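/- Let p : I × I → [0,∞) satisfy hypotheses (H2) and (H3), and set δ = δ₀^K. Then for all x ∈ I and all v, s, t ∈ Δ_x the following uniform Harnack inequalities hold in [0,∞]: G_{p,Δ_x}(s,t) ≤ δ^{−d(s,v)}·G_{p,Δ_x}(v,t) and G_{p,Δ_x}(s,t) ≤ δ^{−d(t,v)}·G_{p,Δ_x}(s,v). (Lemma 4.2 of the paper.) -/

import Mathlib

open scoped ENNReal

namespace Paper

/-- Words in the two letters `α, β`: the free monoid on two generators, as `List Bool`.
The head of the list is the leftmost letter. -/
abbrev Word := List Bool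

/-- Length of the longest common prefix of two lists. -/
def lcpLen : List Bool → List Bool → ℕ
  | a :: s, b :: t => if a = b then lcpLen s t + 1 else 0
  | _, _ => 0

/-- Length of the longest common suffix of two words. -/
def lcsLen (s t : Word) : ℕ := lcpLen s.reverse t.reverse

/-- The tree metric on `Word`: `d(s,t) = (|s| - k) + (|t| - k)`, `k` the length of the
longest common suffix. -/
def treeDist (s t : Word) : ℕ := (s.length - lcsLen s t) + (t.length - lcsLen s t)

/-- The branch `Δ_x = {u x : u ∈ I}` of words having `x` as a suffix. -/
def Delta (x : Word) : Set Word := {s | x <:+ s}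

/-- The geodesic segment `[s,t] = {v : d(s,v) + d(v,t) = d(s,t)}`. -/
def geodesic (s t : Word) : Set Word := {v | treeDist s v + treeDist v t = treeDist s t}

/-- Paths of `n` steps from `s` to `t` staying in `Ω`. -/
def pathSet {X : Type*} (Ω : Set X) (n : ℕ) (s t : X) : Set (Fin (n + 1) → X) :=
  {σ | σ 0 = s ∧ σ (Fin.last n) = t ∧ ∀ i, σ i ∈ Ω}

/-- The weight `∏ a(s_i, s_{i+1})` of a path, as an extended nonnegative real. -/
noncomputable def weightE {X : Type*} (a : X → X → ℝ) (n : ℕ) (σ : Fin (n + 1) → X) : ℝ≥0∞ :=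
  ∏ i : Fin n, ENNReal.ofReal (a (σ i.castSucc) (σ i.succ))

/-- The `n`-step kernel `a⁽ⁿ⁾(s,t)` of the kernel `a` on `Ω`, with values in `[0,∞]`. -/
noncomputable def nStepE {X : Type*} (Ω : Set X) (a : X → X → ℝ) (n : ℕ) (s t : X) : ℝ≥0∞ :=
  ∑' σ : pathSet Ω n s t, weightE a n σ.1

/-- The Green kernel `G_a(s,t) = Σ_n a⁽ⁿ⁾(s,t)` of `a` on `Ω`, with values in `[0,∞]`. -/
noncomputable def greenE {X : Type*} (Ω : Set X) (a : X → X → ℝ) (s t : X) : ℝ≥0∞ :=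
  ∑' n : ℕ, nStepE Ω a n s t

/-- The weight of a path, real version (for signed kernels). -/
noncomputable def weightR {X : Type*} (a : X → X → ℝ) (n : ℕ) (σ : Fin (n + 1) → X) : ℝ :=
  ∏ i : Fin n, a (σ i.castSucc) (σ i.succ)

/-- The `n`-step kernel of a signed kernel `a` on `Ω`. -/
noncomputable def nStepR {X : Type*} (Ω : Set X) (a : X → X → ℝ) (n : ℕ) (s t : X) : ℝ :=
  ∑' σ : pathSet Ω n s t, weightR a n σ.1

/-- The Green kernel of a signed kernel `a` on `Ω`, as a real number. -/
noncomputable def greenR {X : Type*} (Ω : Set X) (a : X → X → ℝ) (s t : X) : ℝ :=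
  ∑' n : ℕ, nStepR Ω a n s t

/-- The Green kernel of `|a|`: finiteness of this expresses absolute convergence of the
series defining the Green kernel of `a`. -/
noncomputable def greenAbs {X : Type*} (Ω : Set X) (a : X → X → ℝ) (s t : X) : ℝ≥0∞ :=
  greenE Ω (fun u v => |a u v|) s t

/-- (H1): finite range `S`. -/
def H1 (p : Word → Word → ℝ) (S : ℕ) : Prop := ∀ s t, S < treeDist s t → p s t = 0

/-- (H2): nonzero transition probabilities are bounded below by `δ₀`. -/
def H2 (p : Word → Word → ℝ) (δ₀ : ℝ) : Prop := ∀ s t, 0 < p s t → δ₀ ≤ p s t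

/-- (H3): uniform irreducibility. -/
def H3 (p : Word → Word → ℝ) (δ₀ : ℝ) (K : ℕ) : Prop :=
  ∀ s t, treeDist s t = 1 → ∃ k ≤ K, ∃ u : ℕ → Word, u 0 = s ∧ u k = t ∧
    ∀ i < k, ∀ x : Word, δ₀ ≤ p (u i ++ x) (u (i + 1) ++ x)

/-- The operator `(Pf)(s) = Σ_t p(s,t) f(t)` extends to a bounded operator of norm at most
`lam` on `ℓ²(X, m)`, expressed via the associated bilinear form on finitely supported
functions. -/
def opNormBound {X : Type*} (m : X → ℝ) (p : X → X → ℝ) (lam : ℝ) : Prop :=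
  ∀ f g : X → ℝ, (Function.support f).Finite → (Function.support g).Finite →
    |∑' s, m s * g s * ∑' t, p s t * f t| ≤
      lam * Real.sqrt (∑' x, m x * f x ^ 2) * Real.sqrt (∑' x, m x * g x ^ 2)

/-- (H4): there is a weight `m` for which `P` is bounded of norm at most `lam` on `ℓ²(I,m)`. -/
def H4 (p : Word → Word → ℝ) (m : Word → ℝ) (lam : ℝ) : Prop :=
  (∀ x, 0 < m x) ∧ opNormBound m p lam

/-- Substochasticity: `Σ_t p(s,t) ≤ 1` for every `s`. -/
def Substochastic (p : Word → Word → ℝ) : Prop :=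
  ∀ s, (∑' t, ENNReal.ofReal (p s t)) ≤ 1

/-- `b` is a `q`-perturbation of `p` on `Δ_z` (with constant `C`). -/
def Perturb (p b : Word → Word → ℝ) (z : Word) (q C : ℝ) : Prop :=
  ∀ s t, s ∈ Delta z → t ∈ Delta z →
    |b s t| ≤ p s t ∧ |b s t - p s t| ≤ C * q ^ s.length

/-- The word `ω|k = ω(k-1) ω(k-2) ⋯ ω(0)` of length `k` determined by an end `ω`. -/
def endWord (ω : ℕ → Bool) (k : ℕ) : Word := (List.range k).reverse.map ω

/-- The last-entrance kernel `M_p(s,u)`: sum over paths from `s` to `u` of length at least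
one whose second-to-last point lies outside `Δ_x`. -/
noncomputable def lastEnter (p : Word → Word → ℝ) (x s u : Word) : ℝ≥0∞ :=
  ∑' m : ℕ, ∑' σ : {σ : Fin (m + 2) → Word //
      σ ∈ pathSet Set.univ (m + 1) s u ∧ σ ((Fin.last m).castSucc) ∉ Delta x},
    weightE p (m + 1) σ.1

/-- The quantum integer `[n]_q = (q⁻ⁿ - qⁿ)/(q⁻¹ - q)`. -/
noncomputable def qInt (q : ℝ) (n : ℕ) : ℝ := (q ^ (-(n : ℤ)) - q ^ (n : ℤ)) / (q⁻¹ - q)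

/-- The lengths of the blocks in the canonical factorization of a word into maximal
alternating subwords. -/
def blockLens : Word → List ℕ
  | [] => []
  | [_] => [1]
  | a :: b :: rest =>
    match blockLens (b :: rest) with
    | [] => [1]
    | k :: ks => if a = b then 1 :: (k :: ks) else (k + 1) :: ks

/-- The quantum dimension `dim_q(x) = Π_i [|x_i| + 1]_q` over the blocks of `x`. -/
noncomputable def dimq (q : ℝ) (x : Word) : ℝ := ((blockLens x).map fun L => qInt q (L + 1)).prod

/-- The classical dimension `dim(x) = Π_i (|x_i| + 1)` over the blocks of `x`. -/
noncomputable def dimn (x : Word) : ℝ := ((blockLens x).map fun L => (L + 1 : ℝ)).prod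

/-- The involution `x ↦ x̄`: reverse the word and exchange the two letters. -/
def bar (x : Word) : Word := (x.map fun a => !a).reverse

/-- The fusion multiplicity `mᵗ_{r,s}`: the number of words `z` such that `r = r₀ z`,
`s = z̄ s₀`, `t = r₀ s₀` for some `r₀, s₀`. -/
noncomputable def fuse (r s t : Word) : ℕ :=
  {z : Word | ∃ r₀ s₀ : Word, r = r₀ ++ z ∧ s = bar z ++ s₀ ∧ t = r₀ ++ s₀}.ncard

/-- A finitely supported probability measure on `Word`. -/
def IsProbMeasure (μ : Word → ℝ) : Prop :=
  (∀ x, 0 ≤ μ x) ∧ (Function.support μ).Finite ∧ ∑' x, μ x = 1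

/-- The transition kernel `p_μ(s,t) = Σ_r μ(r) mᵗ_{r,s} dim_q(t)/(dim_q(r) dim_q(s))`. -/
noncomputable def pMu (q : ℝ) (μ : Word → ℝ) (s t : Word) : ℝ :=
  ∑' r, μ r * (fuse r s t : ℝ) * dimq q t / (dimq q r * dimq q s)

/-- The `q`-binomial coefficient. -/
noncomputable def qbinom (q : ℝ) (n k : ℕ) : ℝ :=
  q ^ (-((k * (n - k) : ℕ) : ℤ)) *
    ∏ i ∈ Finset.range k, (1 - q ^ (2 * (n - i))) / (1 - q ^ (2 * (k - i)))

/-!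
Prepending one step to a path shows `p(v,w) G(w,t) ≤ G(v,t)` for `v` in the domain. Iterating this
along the translate by `x` of a path provided by (H3), which stays in `Δ_x`, gives
`G(s,t) ≤ δ⁻¹ G(v,t)` for neighbours `s, v` in `Δ_x`. As `Δ_x` is a subtree, the geodesic from `s`
to `v` stays inside it, and multiplying the estimates for neighbours along this geodesic gives the
first Harnack inequality. The second is the first for the transposed kernel: (H3) is invariant under
transposition, and reversing paths exchanges the two arguments of the Green kernel.
-/

section GreenKernel

variable {X : Type*} (Ω : Set X) (a : X → X → ℝ)

theorem ofReal_mul_nStepE_le {v : X} (hv : v ∈ Ω) (w t : X) (n : ℕ) :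
    ENNReal.ofReal (a v w) * nStepE Ω a n w t ≤ nStepE Ω a (n + 1) v t := by
  let prepend (σ : pathSet Ω n w t) : pathSet Ω (n + 1) v t :=
    ⟨Fin.cons v σ.1, by simp, by rw [← Fin.succ_last, Fin.cons_succ, σ.2.2.1],
      Fin.cases (by simpa using hv) fun i => by simpa using σ.2.2.2 i⟩
  have prepend_injective : Function.Injective prepend := fun σ τ h =>
    Subtype.ext (Fin.cons_right_injective (α := fun _ => X) v (congrArg Subtype.val h))
  have weightE_prepend (σ : pathSet Ω n w t) :
      weightE a (n + 1) (prepend σ).1 = ENNReal.ofReal (a v w) * weightE a n σ.1 := by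
    simp [prepend, weightE, Fin.prod_univ_succ, σ.2.1]
  calc ENNReal.ofReal (a v w) * nStepE Ω a n w t
      = ∑' σ, weightE a (n + 1) (prepend σ).1 := by
        simp only [nStepE, weightE_prepend, ENNReal.tsum_mul_left]
    _ ≤ nStepE Ω a (n + 1) v t :=
        ENNReal.tsum_comp_le_tsum_of_injective prepend_injective fun σ => weightE a (n + 1) σ.1

theorem ofReal_mul_greenE_le {v : X} (hv : v ∈ Ω) (w t : X) :
    ENNReal.ofReal (a v w) * greenE Ω a w t ≤ greenE Ω a v t :=
  calc ENNReal.ofReal (a v w) * greenE Ω a w t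
      = ∑' n, ENNReal.ofReal (a v w) * nStepE Ω a n w t := ENNReal.tsum_mul_left.symm
    _ ≤ ∑' n, nStepE Ω a (n + 1) v t :=
        ENNReal.tsum_le_tsum (ofReal_mul_nStepE_le Ω a hv w t)
    _ ≤ greenE Ω a v t :=
        ENNReal.tsum_comp_le_tsum_of_injective (add_left_injective 1) fun n => nStepE Ω a n v t

variable {Ω a} in
theorem ofReal_pow_mul_greenE_le {δ : ℝ} {u : ℕ → X} {k : ℕ} (hΩ : ∀ i < k, u i ∈ Ω)
    (hδ : ∀ i < k, δ ≤ a (u i) (u (i + 1))) (t : X) :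
    ENNReal.ofReal δ ^ k * greenE Ω a (u k) t ≤ greenE Ω a (u 0) t := by
  induction k with
  | zero => simp
  | succ k ih =>
    calc ENNReal.ofReal δ ^ (k + 1) * greenE Ω a (u (k + 1)) t
        = ENNReal.ofReal δ ^ k * (ENNReal.ofReal δ * greenE Ω a (u (k + 1)) t) := by
          rw [pow_succ, mul_assoc]
      _ ≤ ENNReal.ofReal δ ^ k *
            (ENNReal.ofReal (a (u k) (u (k + 1))) * greenE Ω a (u (k + 1)) t) := by
          gcongr
          exact hδ k k.lt_succ_self
      _ ≤ ENNReal.ofReal δ ^ k * greenE Ω a (u k) t := by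
          gcongr
          exact ofReal_mul_greenE_le Ω a (hΩ k k.lt_succ_self) _ t
      _ ≤ greenE Ω a (u 0) t :=
          ih (fun i hi => hΩ i (hi.trans k.lt_succ_self)) fun i hi => hδ i (hi.trans k.lt_succ_self)

theorem weightE_flip_comp_rev {n : ℕ} (σ : Fin (n + 1) → X) :
    weightE (flip a) n (σ ∘ Fin.rev) = weightE a n σ := by
  simp only [weightE, flip, Function.comp_apply, Fin.rev_castSucc, Fin.rev_succ]
  exact Equiv.prod_comp Fin.revPerm fun i => ENNReal.ofReal (a (σ i.castSucc) (σ i.succ))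

theorem comp_rev_mem_pathSet {n : ℕ} {s t : X} {σ : Fin (n + 1) → X} (hσ : σ ∈ pathSet Ω n s t) :
    σ ∘ Fin.rev ∈ pathSet Ω n t s :=
  ⟨by simpa using hσ.2.1, by simpa using hσ.1, fun i => hσ.2.2 i.rev⟩

theorem nStepE_flip (n : ℕ) (s t : X) : nStepE Ω (flip a) n t s = nStepE Ω a n s t := by
  let reversal : pathSet Ω n s t ≃ pathSet Ω n t s :=
    { toFun := fun σ => ⟨σ.1 ∘ Fin.rev, comp_rev_mem_pathSet Ω σ.2⟩
      invFun := fun σ => ⟨σ.1 ∘ Fin.rev, comp_rev_mem_pathSet Ω σ.2⟩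
      left_inv := fun σ => Subtype.ext (by funext i; simp)
      right_inv := fun σ => Subtype.ext (by funext i; simp) }
  rw [nStepE, ← reversal.tsum_eq]
  exact tsum_congr fun σ => weightE_flip_comp_rev a σ.1

theorem greenE_flip (s t : X) : greenE Ω (flip a) t s = greenE Ω a s t :=
  tsum_congr fun n => nStepE_flip Ω a n s t

end GreenKernel

section TreeMetric

theorem lcpLen_comm (l m : List Bool) : lcpLen l m = lcpLen m l := by
  induction l generalizing m with
  | nil => cases m <;> simp only [lcpLen]
  | cons b l ih => cases m with
    | nil => simp only [lcpLen]
    | cons c m => simp only [lcpLen, ih m, eq_comm]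

theorem lcpLen_append_append (c l m : List Bool) :
    lcpLen (c ++ l) (c ++ m) = c.length + lcpLen l m := by
  induction c with
  | nil => simp
  | cons b c ih => simp [lcpLen, ih, add_right_comm]

theorem exists_isPrefix_length_eq_lcpLen (l m : List Bool) :
    ∃ c, c <+: l ∧ c <+: m ∧ c.length = lcpLen l m := by
  induction l generalizing m with
  | nil => exact ⟨[], by simp [lcpLen]⟩
  | cons b l ih => cases m with
    | nil => exact ⟨[], by simp [lcpLen]⟩
    | cons b' m =>
      obtain rfl | hb := eq_or_ne b b'
      · obtain ⟨c, hl, hm, hc⟩ := ih m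
        exact ⟨b :: c, by simpa using hl, by simpa using hm, by simp [lcpLen, hc]⟩
      · exact ⟨[], by simp [lcpLen, hb]⟩

theorem lcsLen_append_append (s t c : Word) :
    lcsLen (s ++ c) (t ++ c) = c.length + lcsLen s t := by
  simp only [lcsLen, List.reverse_append, lcpLen_append_append, List.length_reverse]

theorem exists_isSuffix_length_eq_lcsLen (s t : Word) :
    ∃ c, c <:+ s ∧ c <:+ t ∧ c.length = lcsLen s t := by
  obtain ⟨c, hs, ht, hc⟩ := exists_isPrefix_length_eq_lcpLen s.reverse t.reverse
  exact ⟨c.reverse, by simpa using hs.reverse, by simpa using ht.reverse,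
    by simpa [lcsLen] using hc⟩

theorem length_le_lcsLen {x s t : Word} (hs : x <:+ s) (ht : x <:+ t) : x.length ≤ lcsLen s t := by
  obtain ⟨a, rfl⟩ := hs
  obtain ⟨b, rfl⟩ := ht
  simp only [lcsLen_append_append, Nat.le_add_right]

theorem treeDist_comm (s t : Word) : treeDist s t = treeDist t s := by
  simp only [treeDist, lcsLen, lcpLen_comm s.reverse, add_comm]

theorem treeDist_append_append (s t c : Word) : treeDist (s ++ c) (t ++ c) = treeDist s t := by
  simp only [treeDist, lcsLen_append_append, List.length_append, add_comm c.length,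
    Nat.add_sub_add_right]

theorem treeDist_cons_self (b : Bool) (s : Word) : treeDist (b :: s) s = 1 :=
  treeDist_append_append [b] [] s

theorem exists_common_suffix_mem_Delta {x s t : Word} (hs : s ∈ Delta x) (ht : t ∈ Delta x) :
    ∃ a b c : Word, c ∈ Delta x ∧ s = a ++ c ∧ t = b ++ c ∧
      treeDist s t = a.length + b.length := by
  obtain ⟨c, hcs, hct, hc⟩ := exists_isSuffix_length_eq_lcsLen s t
  have hxc : x <:+ c := List.suffix_of_suffix_length_le hs hcs (hc ▸ length_le_lcsLen hs ht)
  obtain ⟨a, rfl⟩ := hcs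
  obtain ⟨b, rfl⟩ := hct
  exact ⟨a, b, c, hxc, rfl, rfl, by simp [treeDist, ← hc]⟩

theorem append_mem_Delta {x c : Word} (hc : c ∈ Delta x) (a : Word) : a ++ c ∈ Delta x :=
  hc.trans (List.suffix_append a c)

end TreeMetric

section Harnack

theorem append_le_pow_length_mul {F : Word → ℝ≥0∞} {D : ℝ≥0∞} {x c : Word}
    (hF : ∀ b, ∀ w ∈ Delta x, F (b :: w) ≤ D * F w) (hc : c ∈ Delta x) (a : Word) :
    F (a ++ c) ≤ D ^ a.length * F c := by
  induction a with
  | nil => simp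
  | cons b a ih =>
    calc F (b :: (a ++ c)) ≤ D * F (a ++ c) := hF b _ (append_mem_Delta hc a)
      _ ≤ D * (D ^ a.length * F c) := by gcongr
      _ = D ^ (b :: a).length * F c := by rw [List.length_cons, pow_succ', mul_assoc]

theorem le_pow_length_mul_append {F : Word → ℝ≥0∞} {D : ℝ≥0∞} {x c : Word}
    (hF : ∀ b, ∀ w ∈ Delta x, F w ≤ D * F (b :: w)) (hc : c ∈ Delta x) (a : Word) :
    F c ≤ D ^ a.length * F (a ++ c) := by
  induction a with
  | nil => simp
  | cons b a ih =>
    calc F c ≤ D ^ a.length * F (a ++ c) := ih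
      _ ≤ D ^ a.length * (D * F (b :: (a ++ c))) := by
          gcongr
          exact hF b _ (append_mem_Delta hc a)
      _ = D ^ (b :: a).length * F (b :: a ++ c) := by
          rw [List.length_cons, pow_succ, mul_assoc, List.cons_append]

theorem le_pow_treeDist_mul {F : Word → ℝ≥0∞} {D : ℝ≥0∞} {x s v : Word}
    (hF : ∀ s ∈ Delta x, ∀ v ∈ Delta x, treeDist s v = 1 → F s ≤ D * F v)
    (hs : s ∈ Delta x) (hv : v ∈ Delta x) : F s ≤ D ^ treeDist s v * F v := by
  have cons_le (b : Bool) (w : Word) (hw : w ∈ Delta x) : F (b :: w) ≤ D * F w :=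
    hF _ (append_mem_Delta hw [b]) w hw (treeDist_cons_self b w)
  have le_cons (b : Bool) (w : Word) (hw : w ∈ Delta x) : F w ≤ D * F (b :: w) :=
    hF w hw _ (append_mem_Delta hw [b]) (treeDist_comm _ _ ▸ treeDist_cons_self b w)
  obtain ⟨a, b, c, hc, rfl, rfl, hdist⟩ := exists_common_suffix_mem_Delta hs hv
  calc F (a ++ c) ≤ D ^ a.length * F c := append_le_pow_length_mul cons_le hc a
    _ ≤ D ^ a.length * (D ^ b.length * F (b ++ c)) := by
        gcongr
        exact le_pow_length_mul_append le_cons hc b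
    _ = D ^ treeDist (a ++ c) (b ++ c) * F (b ++ c) := by rw [hdist, pow_add, mul_assoc]

theorem H3.flip {p : Word → Word → ℝ} {δ₀ : ℝ} {K : ℕ} (h3 : H3 p δ₀ K) :
    H3 (flip p) δ₀ K := by
  intro s t hst
  obtain ⟨k, hk, u, hu₀, huk, hstep⟩ := h3 t s (treeDist_comm s t ▸ hst)
  refine ⟨k, hk, fun i => u (k - i), by simpa using huk, by simpa using hu₀, fun i hi x => ?_⟩
  have hsucc : k - i = k - (i + 1) + 1 := by omega
  change δ₀ ≤ p (u (k - (i + 1)) ++ x) (u (k - i) ++ x)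
  rw [hsucc]
  exact hstep (k - (i + 1)) (by omega) x

theorem greenE_le_inv_mul_of_treeDist_eq_one {p : Word → Word → ℝ} {δ₀ : ℝ} {K : ℕ} (hpos : 0 < δ₀)
    (hle : δ₀ ≤ 1) (h3 : H3 p δ₀ K) {x s v : Word} (hs : s ∈ Delta x) (hv : v ∈ Delta x)
    (hsv : treeDist s v = 1) (t : Word) :
    greenE (Delta x) p s t ≤ (ENNReal.ofReal (δ₀ ^ K))⁻¹ * greenE (Delta x) p v t := by
  obtain ⟨a, rfl⟩ := hs
  obtain ⟨b, rfl⟩ := hv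
  rw [treeDist_append_append, treeDist_comm] at hsv
  obtain ⟨k, hk, u, rfl, rfl, hstep⟩ := h3 b a hsv
  have hδK : ENNReal.ofReal (δ₀ ^ K) ≠ 0 := by simpa using pow_pos hpos K
  refine (ENNReal.mul_le_iff_le_inv hδK ENNReal.ofReal_ne_top).1 ?_
  calc ENNReal.ofReal (δ₀ ^ K) * greenE (Delta x) p (u k ++ x) t
      ≤ ENNReal.ofReal δ₀ ^ k * greenE (Delta x) p (u k ++ x) t := by
        rw [← ENNReal.ofReal_pow hpos.le]
        gcongr ENNReal.ofReal ?_ * _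
        exact pow_le_pow_of_le_one hpos.le hle hk
    _ ≤ greenE (Delta x) p (u 0 ++ x) t :=
        ofReal_pow_mul_greenE_le (u := fun i => u i ++ x)
          (fun i _ => List.suffix_append (u i) x) (fun i hi => hstep i hi x) t

theorem greenE_le_inv_pow_treeDist_mul {p : Word → Word → ℝ} {δ₀ : ℝ} {K : ℕ} (hpos : 0 < δ₀)
    (hle : δ₀ ≤ 1) (h3 : H3 p δ₀ K) {x s v : Word} (hs : s ∈ Delta x) (hv : v ∈ Delta x)
    (t : Word) :
    greenE (Delta x) p s t ≤
      (ENNReal.ofReal (δ₀ ^ K))⁻¹ ^ treeDist s v * greenE (Delta x) p v t :=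
  le_pow_treeDist_mul (F := fun w => greenE (Delta x) p w t)
    (fun _ hs _ hv hsv => greenE_le_inv_mul_of_treeDist_eq_one hpos hle h3 hs hv hsv t) hs hv

end Harnack

theorem lem_4_2_general (p : Word → Word → ℝ) (_hp : ∀ s t, 0 ≤ p s t) {δ₀ : ℝ} (hpos : 0 < δ₀)
    (hle : δ₀ ≤ 1) {K : ℕ} (h3 : H3 p δ₀ K) {x v s t : Word} (hv : v ∈ Delta x)
    (hs : s ∈ Delta x) (ht : t ∈ Delta x) :
    greenE (Delta x) p s t ≤
        (ENNReal.ofReal (δ₀ ^ K))⁻¹ ^ treeDist s v * greenE (Delta x) p v t ∧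
      greenE (Delta x) p s t ≤
        (ENNReal.ofReal (δ₀ ^ K))⁻¹ ^ treeDist t v * greenE (Delta x) p s v := by
  refine ⟨greenE_le_inv_pow_treeDist_mul hpos hle h3 hs hv t, ?_⟩
  rw [← greenE_flip _ p s t, ← greenE_flip _ p s v]
  exact greenE_le_inv_pow_treeDist_mul hpos hle h3.flip ht hv s

/-- Lemma 4.2: uniform Harnack inequalities for the Green kernels `G_{p,Δ_x}` with
`δ = δ₀^K`, holding in `[0,∞]`. -/
theorem lem_4_2 (p : Word → Word → ℝ) (hp : ∀ s t, 0 ≤ p s t)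
    (δ₀ : ℝ) (hδ₀ : δ₀ ∈ Set.Ioo (0 : ℝ) 1) (K : ℕ)
    (h2 : H2 p δ₀) (h3 : H3 p δ₀ K) :
    ∀ x : Word, ∀ v ∈ Delta x, ∀ s ∈ Delta x, ∀ t ∈ Delta x,
      greenE (Delta x) p s t ≤
        (ENNReal.ofReal (δ₀ ^ K))⁻¹ ^ treeDist s v * greenE (Delta x) p v t ∧
      greenE (Delta x) p s t ≤
        (ENNReal.ofReal (δ₀ ^ K))⁻¹ ^ treeDist t v * greenE (Delta x) p s v := by
  intro x v hv s hs t ht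
  exact lem_4_2_general p hp hδ₀.1 hδ₀.2.le h3 hv hs ht

end Paper
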